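/- arXiv:2405.09135 — 2 statements merged into one kernel-verified Lean document; each statement's English description precedes it below -/
import Mathlib

section
/- For the two-qubit example model, the subspace S_0 equals the ℂ-linear span of the three matrices σx⊗σz, σy⊗σz and σz⊗σz. -/
/-! `Liou (H ⊗ I₂)` acts on `A ⊗ σz` through the first factor only, as `-i[H, A] ⊗ σz`. The Pauli
commutation relations then show that the two control Liouvillians map the span of `σx ⊗ σz`,
`σy ⊗ σz`, `σz ⊗ σz` into itself, which gives one inclusion (`Liou_Hc_mem`). Conversely, a single
application of `L₁` or `L₂` to `M = σz ⊗ σz` yields `-2 σy ⊗ σz` and `2 σx ⊗ σz`. -/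

open Matrix Kronecker

/-- The Pauli matrix `σx`. -/
noncomputable def σx : Matrix (Fin 2) (Fin 2) ℂ := !![0, 1; 1, 0]

/-- The Pauli matrix `σy`. -/
noncomputable def σy : Matrix (Fin 2) (Fin 2) ℂ := !![0, -Complex.I; Complex.I, 0]

/-- The Pauli matrix `σz`. -/
noncomputable def σz : Matrix (Fin 2) (Fin 2) ℂ := !![1, 0; 0, -1]

/-- The 2×2 identity matrix. -/
noncomputable def I₂ : Matrix (Fin 2) (Fin 2) ℂ := 1

/-- The drift/encoding Hamiltonian `H₀ = σz ⊗ σz` of the two-qubit example model. -/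
noncomputable def H0 : Matrix (Fin 2 × Fin 2) (Fin 2 × Fin 2) ℂ := σz ⊗ₖ σz

/-- The control Hamiltonians `H₁ = σx ⊗ I₂` and `H₂ = σy ⊗ I₂` of the two-qubit example model. -/
noncomputable def Hc : Fin 2 → Matrix (Fin 2 × Fin 2) (Fin 2 × Fin 2) ℂ := ![σx ⊗ₖ I₂, σy ⊗ₖ I₂]

/-- The observable `M = σz ⊗ σz` of the two-qubit example model. -/
noncomputable def Mobs : Matrix (Fin 2 × Fin 2) (Fin 2 × Fin 2) ℂ := σz ⊗ₖ σz

/-- The Liouvillian `L(A) = [−i H, A]` as a linear endomorphism of matrices. -/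
noncomputable def Liou (H : Matrix (Fin 2 × Fin 2) (Fin 2 × Fin 2) ℂ) :
    Module.End ℂ (Matrix (Fin 2 × Fin 2) (Fin 2 × Fin 2) ℂ) :=
  LinearMap.mulLeft ℂ ((-Complex.I) • H) - LinearMap.mulRight ℂ ((-Complex.I) • H)

/-- `Oset S` is the ℂ-linear span of all operators `L_{j₁} ∘ ⋯ ∘ L_{jₙ}(A)` with `n ≥ 0`,
`j₁, …, jₙ ∈ {1, 2}` and `A ∈ S` (including `A` itself for `n = 0`). -/
noncomputable def Oset (S : Set (Matrix (Fin 2 × Fin 2) (Fin 2 × Fin 2) ℂ)) :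
    Submodule ℂ (Matrix (Fin 2 × Fin 2) (Fin 2 × Fin 2) ℂ) :=
  Submodule.span ℂ
    {X | ∃ (w : List (Fin 2)) (A : Matrix (Fin 2 × Fin 2) (Fin 2 × Fin 2) ℂ), A ∈ S ∧
      ((w.map fun j => Liou (Hc j)).prod) A = X}

/-- The subspaces `S_0 = O({M})`, `S_k = O(L₀(S_{k-1}))` of the two-qubit example model. -/
noncomputable def Sk : ℕ → Submodule ℂ (Matrix (Fin 2 × Fin 2) (Fin 2 × Fin 2) ℂ)
  | 0 => Oset {Mobs}
  | (k + 1) => Oset (Liou H0 '' (Sk k))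

lemma Liou_kron (H A B : Matrix (Fin 2) (Fin 2) ℂ) :
    Liou (H ⊗ₖ I₂) (A ⊗ₖ B) = ((-Complex.I) • (H * A - A * H)) ⊗ₖ B := by
  simp only [Liou, LinearMap.sub_apply, LinearMap.mulLeft_apply, LinearMap.mulRight_apply, I₂,
    smul_mul_assoc, mul_smul_comm, ← Matrix.mul_kronecker_mul, one_mul, mul_one]
  ext i j
  simp only [Matrix.sub_apply, Matrix.smul_apply, Matrix.kroneckerMap_apply, smul_eq_mul]
  ring

lemma comm_xy : (-Complex.I) • (σx * σy - σy * σx) = (2 : ℂ) • σz := by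
  ext i j
  fin_cases i <;> fin_cases j <;> simp [σx, σy, σz] <;> ring_nf <;> simp

lemma comm_xz : (-Complex.I) • (σx * σz - σz * σx) = (-2 : ℂ) • σy := by
  ext i j
  fin_cases i <;> fin_cases j <;> simp [σx, σy, σz] <;> ring_nf

lemma comm_yz : (-Complex.I) • (σy * σz - σz * σy) = (2 : ℂ) • σx := by
  ext i j
  fin_cases i <;> fin_cases j <;> simp [σx, σy, σz] <;> ring_nf <;> simp

lemma comm_yx : (-Complex.I) • (σy * σx - σx * σy) = (-2 : ℂ) • σz := by
  rw [← neg_sub, smul_neg, comm_xy, neg_smul]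

/-- The span of the three matrices is invariant under the control Liouvillians. -/
lemma Liou_Hc_mem (j : Fin 2) {X : Matrix (Fin 2 × Fin 2) (Fin 2 × Fin 2) ℂ}
    (hX : X ∈ Submodule.span ℂ {σx ⊗ₖ σz, σy ⊗ₖ σz, σz ⊗ₖ σz}) :
    Liou (Hc j) X ∈ Submodule.span ℂ {σx ⊗ₖ σz, σy ⊗ₖ σz, σz ⊗ₖ σz} := by
  have hx : σx ⊗ₖ σz ∈ Submodule.span ℂ {σx ⊗ₖ σz, σy ⊗ₖ σz, σz ⊗ₖ σz} :=
    Submodule.subset_span (by simp)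
  have hy : σy ⊗ₖ σz ∈ Submodule.span ℂ {σx ⊗ₖ σz, σy ⊗ₖ σz, σz ⊗ₖ σz} :=
    Submodule.subset_span (by simp)
  have hz : σz ⊗ₖ σz ∈ Submodule.span ℂ {σx ⊗ₖ σz, σy ⊗ₖ σz, σz ⊗ₖ σz} :=
    Submodule.subset_span (by simp)
  rw [← Submodule.mem_comap]
  refine Submodule.span_le.2 ?_ hX
  clear hX
  rintro X (rfl | rfl | rfl) <;> rw [SetLike.mem_coe, Submodule.mem_comap] <;> fin_cases j
  · change Liou (σx ⊗ₖ I₂) _ ∈ _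
    rw [Liou_kron, sub_self, smul_zero, Matrix.zero_kronecker]
    exact zero_mem _
  · change Liou (σy ⊗ₖ I₂) _ ∈ _
    rw [Liou_kron, comm_yx, Matrix.smul_kronecker]
    exact Submodule.smul_mem _ _ hz
  · change Liou (σx ⊗ₖ I₂) _ ∈ _
    rw [Liou_kron, comm_xy, Matrix.smul_kronecker]
    exact Submodule.smul_mem _ _ hz
  · change Liou (σy ⊗ₖ I₂) _ ∈ _
    rw [Liou_kron, sub_self, smul_zero, Matrix.zero_kronecker]
    exact zero_mem _
  · change Liou (σx ⊗ₖ I₂) _ ∈ _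
    rw [Liou_kron, comm_xz, Matrix.smul_kronecker]
    exact Submodule.smul_mem _ _ hy
  · change Liou (σy ⊗ₖ I₂) _ ∈ _
    rw [Liou_kron, comm_yz, Matrix.smul_kronecker]
    exact Submodule.smul_mem _ _ hx

/-- For the two-qubit example model, `S_0 = spanℂ{σx⊗σz, σy⊗σz, σz⊗σz}`. -/
theorem Sk_zero_eq :
    Sk 0 = Submodule.span ℂ {σx ⊗ₖ σz, σy ⊗ₖ σz, σz ⊗ₖ σz} := by
  rw [Sk, Oset]
  apply le_antisymm
  · rw [Submodule.span_le]
    rintro X ⟨w, A, rfl, rfl⟩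
    induction w with
    | nil => exact Submodule.subset_span (by simp [Mobs])
    | cons j w ih =>
      rw [List.map_cons, List.prod_cons, Module.End.mul_apply]
      exact Liou_Hc_mem j ih
  · rw [Submodule.span_le]
    rintro X (rfl | rfl | rfl)
    · refine (Submodule.smul_mem_iff _ (two_ne_zero (α := ℂ))).1
        (Submodule.subset_span ⟨[1], Mobs, rfl, ?_⟩)
      rw [List.map_singleton, List.prod_singleton]
      change Liou (σy ⊗ₖ I₂) (σz ⊗ₖ σz) = _
      rw [Liou_kron, comm_yz, Matrix.smul_kronecker]
    · refine (Submodule.smul_mem_iff _ (neg_ne_zero.2 (two_ne_zero (α := ℂ)))).1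
        (Submodule.subset_span ⟨[0], Mobs, rfl, ?_⟩)
      rw [List.map_singleton, List.prod_singleton]
      change Liou (σx ⊗ₖ I₂) (σz ⊗ₖ σz) = _
      rw [Liou_kron, comm_xz, Matrix.smul_kronecker]
    · exact Submodule.subset_span ⟨[], Mobs, rfl, rfl⟩
end

section
/- For the two-qubit example model with initial state ψ0 = |0⟩ ⊗ (|0⟩ + |1⟩)/√2, for every k ≥ 0 one has ⟨ψ0, A ψ0⟩ = 0 for every A ∈ S_{2k}, while there exists A ∈ S_{2k+1} with ⟨ψ0, A ψ0⟩ ≠ 0. -/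
/-!
Every operator in `S_k` has the form `a ⊗ σz ^ (k + 1)`: the control Liouvillians act on the first
qubit only, while `L₀` acts by a commutator on the first factor and multiplies the second one by
`σz` (`Liou_kronecker`, `Sk_form`). Since `σz² = 1`, the second factor is `σz` for even `k` and the
identity for odd `k`, and `⟨+|σz|+⟩ = 0`, which gives the vanishing for even indices.

Conversely `σz ⊗ σz ^ (k + 1) ∈ S_k` for all `k` (`sigma_z_mem_Sk`), because `L₁ L₀ L₂` maps
`σz ⊗ b` to `8 σz ⊗ σz b` for `b` a power of `σz`; for odd `k` this operator is `σz ⊗ 1`, whose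
expectation is `1`.
-/

open Matrix Kronecker

/-- The initial state `|0⟩ ⊗ (|0⟩ + |1⟩)/√2`. -/
noncomputable def ψplus : Fin 2 × Fin 2 → ℂ :=
  fun q => if q.1 = 0 then ((Real.sqrt 2 : ℂ))⁻¹ else 0

/-- When the second factors commute, the Liouvillian of `h ⊗ c` takes a commutator in the first
factor and a product in the second. -/
lemma Liou_kronecker {h a b c d : Matrix (Fin 2) (Fin 2) ℂ} (hl : c * b = d) (hr : b * c = d) :
    Liou (h ⊗ₖ c) (a ⊗ₖ b) = ((-Complex.I) • (h * a - a * h)) ⊗ₖ d := by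
  simp only [Liou, LinearMap.sub_apply, LinearMap.mulLeft_apply, LinearMap.mulRight_apply,
    Matrix.smul_mul, Matrix.mul_smul, ← Matrix.mul_kronecker_mul, hl, hr, Matrix.smul_kronecker]
  rw [← smul_sub]
  congr 1
  ext i j
  simp [Matrix.kroneckerMap_apply, sub_mul]

lemma exists_Liou_Hc (j : Fin 2) (a b : Matrix (Fin 2) (Fin 2) ℂ) :
    ∃ a', Liou (Hc j) (a ⊗ₖ b) = a' ⊗ₖ b := by
  fin_cases j
  · exact ⟨_, Liou_kronecker (c := I₂) (one_mul b) (mul_one b)⟩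
  · exact ⟨_, Liou_kronecker (c := I₂) (one_mul b) (mul_one b)⟩

lemma Oset_form {S : Set (Matrix (Fin 2 × Fin 2) (Fin 2 × Fin 2) ℂ)}
    {b : Matrix (Fin 2) (Fin 2) ℂ} (hS : ∀ A ∈ S, ∃ a, A = a ⊗ₖ b) :
    ∀ A ∈ Oset S, ∃ a, A = a ⊗ₖ b := by
  intro A hA
  induction hA using Submodule.span_induction with
  | mem X hX =>
    obtain ⟨w, A, hA, rfl⟩ := hX
    induction w with
    | nil => simpa using hS A hA
    | cons j w ih =>
      obtain ⟨a, ha⟩ := ih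
      obtain ⟨a', ha'⟩ := exists_Liou_Hc j a b
      exact ⟨a', by rw [List.map_cons, List.prod_cons, Module.End.mul_apply, ha, ha']⟩
  | zero => exact ⟨0, by simp⟩
  | add X Y _ _ hX hY =>
    obtain ⟨x, rfl⟩ := hX
    obtain ⟨y, rfl⟩ := hY
    exact ⟨x + y, (Matrix.add_kronecker x y b).symm⟩
  | smul r X _ hX =>
    obtain ⟨x, rfl⟩ := hX
    exact ⟨r • x, (Matrix.smul_kronecker r x b).symm⟩

lemma Sk_form (k : ℕ) : ∀ A ∈ Sk k, ∃ a, A = a ⊗ₖ (σz ^ (k + 1)) := by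
  induction k with
  | zero =>
    refine Oset_form ?_
    rintro A rfl
    exact ⟨σz, by simp [Mobs]⟩
  | succ k ih =>
    refine Oset_form ?_
    rintro _ ⟨A, hA, rfl⟩
    obtain ⟨a, rfl⟩ := ih A hA
    exact ⟨_, Liou_kronecker (pow_succ' σz (k + 1)).symm (pow_succ σz (k + 1)).symm⟩

lemma subset_Oset {S : Set (Matrix (Fin 2 × Fin 2) (Fin 2 × Fin 2) ℂ)} {A} (hA : A ∈ S) :
    A ∈ Oset S :=
  Submodule.subset_span ⟨[], A, hA, by simp⟩

lemma Liou_Hc_mem_Oset {S : Set (Matrix (Fin 2 × Fin 2) (Fin 2 × Fin 2) ℂ)} (j : Fin 2) {A}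
    (hA : A ∈ Oset S) : Liou (Hc j) A ∈ Oset S := by
  induction hA using Submodule.span_induction with
  | mem X hX =>
    obtain ⟨w, A, hA, rfl⟩ := hX
    exact Submodule.subset_span ⟨j :: w, A, hA, by
      rw [List.map_cons, List.prod_cons, Module.End.mul_apply]⟩
  | zero => simp
  | add X Y _ _ hX hY => rw [map_add]; exact add_mem hX hY
  | smul r X _ hX => rw [map_smul]; exact Submodule.smul_mem _ r hX

lemma Liou_Hc_mem_Sk (j : Fin 2) {k : ℕ} {A} (hA : A ∈ Sk k) : Liou (Hc j) A ∈ Sk k := by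
  cases k <;> exact Liou_Hc_mem_Oset j hA

/-- The nested commutator `[σx, [σz, [σy, σz]]]`, with the factors `-i`, equals `8 σz`. -/
lemma pauli_triple :
    (-Complex.I) • (σx * ((-Complex.I) • (σz * ((-Complex.I) • (σy * σz - σz * σy)) -
      ((-Complex.I) • (σy * σz - σz * σy)) * σz)) -
      ((-Complex.I) • (σz * ((-Complex.I) • (σy * σz - σz * σy)) -
      ((-Complex.I) • (σy * σz - σz * σy)) * σz)) * σx) = (8 : ℂ) • σz := by
  have hI : Complex.I * Complex.I = -1 := Complex.I_mul_I
  ext i j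
  fin_cases i <;> fin_cases j <;>
    simp [σx, σy, σz] <;> grind

lemma sigma_z_mem_Sk (k : ℕ) : σz ⊗ₖ (σz ^ (k + 1)) ∈ Sk k := by
  induction k with
  | zero => exact subset_Oset (by simp [Mobs])
  | succ k ih =>
    have h1 := Liou_Hc_mem_Sk 1 ih
    have h2 : Liou H0 (Liou (Hc 1) (σz ⊗ₖ (σz ^ (k + 1)))) ∈ Sk (k + 1) :=
      subset_Oset ⟨_, h1, rfl⟩
    have h3 := Liou_Hc_mem_Sk 0 h2
    have e1 : Hc 1 = σy ⊗ₖ I₂ := rfl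
    have e0 : Hc 0 = σx ⊗ₖ I₂ := rfl
    rw [e1, e0, H0, Liou_kronecker (c := I₂) (one_mul _) (mul_one _),
      Liou_kronecker (pow_succ' σz (k + 1)).symm (pow_succ σz (k + 1)).symm,
      Liou_kronecker (c := I₂) (one_mul _) (mul_one _), pauli_triple,
      Matrix.smul_kronecker] at h3
    exact (Submodule.smul_mem_iff _ (by norm_num : (8 : ℂ) ≠ 0)).1 h3

lemma sigma_z_sq : σz ^ 2 = 1 := by
  ext i j
  fin_cases i <;> fin_cases j <;> simp [σz, pow_two]

/-- The expectation in `|0⟩ ⊗ |+⟩` factorizes as `⟨0|a|0⟩ ⟨+|b|+⟩`. -/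
lemma expectation_kronecker (a b : Matrix (Fin 2) (Fin 2) ℂ) :
    star ψplus ⬝ᵥ ((a ⊗ₖ b) *ᵥ ψplus) = a 0 0 * ((b 0 0 + b 0 1 + b 1 0 + b 1 1) / 2) := by
  have hs : ((Real.sqrt 2 : ℝ) : ℂ)⁻¹ * ((Real.sqrt 2 : ℝ) : ℂ)⁻¹ = 1 / 2 := by
    rw [← mul_inv, ← Complex.ofReal_mul, Real.mul_self_sqrt (by norm_num)]
    norm_num
  simp [dotProduct, mulVec, Fintype.sum_prod_type, Fin.sum_univ_two, ψplus,
    Matrix.kroneckerMap_apply]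
  linear_combination (a 0 0 * (b 0 0 + b 0 1 + b 1 0 + b 1 1)) * hs

/-- For the two-qubit example model with initial state `|0⟩ ⊗ (|0⟩+|1⟩)/√2`, for every `k ≥ 0`
one has `⟨ψ₀, A ψ₀⟩ = 0` for every `A ∈ S_{2k}`, while some `A ∈ S_{2k+1}` has
`⟨ψ₀, A ψ₀⟩ ≠ 0`. -/
theorem even_expectations_vanish (k : ℕ) :
    (∀ A ∈ Sk (2 * k), star ψplus ⬝ᵥ (A *ᵥ ψplus) = 0) ∧
    (∃ A ∈ Sk (2 * k + 1), star ψplus ⬝ᵥ (A *ᵥ ψplus) ≠ 0) := by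
  constructor
  · intro A hA
    obtain ⟨a, rfl⟩ := Sk_form _ A hA
    rw [expectation_kronecker, pow_succ, pow_mul, sigma_z_sq, one_pow, one_mul]
    simp [σz]
  · refine ⟨_, sigma_z_mem_Sk (2 * k + 1), ?_⟩
    rw [show 2 * k + 1 + 1 = 2 * (k + 1) by ring, expectation_kronecker, pow_mul, sigma_z_sq,
      one_pow]
    norm_num [σz]
end
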